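/- arXiv:1111.5200 — 2 statements merged into one kernel-verified Lean document; each statement's English description precedes it below -/
import Mathlib

section
/- Every finite feasible set L of links (under any power assignment) contains a subset W with |W| ≥ |L|/2 such that W is 2-bi-feasible, i.e., a_W(u) ≤ 2 and a_u(W) ≤ 2 for every u ∈ W. -/
open Finset MeasureTheory
open scoped Classical

/-- A wireless link: an ordered sender–receiver pair of points in a metric space. -/
structure Link (X : Type*) where
  sender : X
  receiver : X

variable {X : Type*} [MetricSpace X]

/-- The length `ℓ_v` of a link. -/
noncomputable def linkLen (v : Link X) : ℝ := dist v.sender v.receiver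

/-- The asymmetric distance `d_{wv}` from the sender of `w` to the receiver of `v`. -/
noncomputable def linkDist (w v : Link X) : ℝ := dist w.sender v.receiver

/-- The constant `c_v = β/(1 - β N ℓ_v^α / P_v)`. -/
noncomputable def cConst (α β N : ℝ) (pw : Link X → ℝ) (v : Link X) : ℝ :=
  β / (1 - β * N * linkLen v ^ α / pw v)

/-- The (thresholded) affectance `a_w(v)` of link `w` on link `v`. -/
noncomputable def aff (α β N : ℝ) (pw : Link X → ℝ) (w v : Link X) : ℝ :=
  if w = v then 0
  else min 1 (cConst α β N pw v * (pw w / pw v) * (linkLen v / linkDist w v) ^ α)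

/-- `a_S(v) = Σ_{w ∈ S} a_w(v)`. -/
noncomputable def affIn (α β N : ℝ) (pw : Link X → ℝ) (S : Finset (Link X)) (v : Link X) : ℝ :=
  ∑ w ∈ S, aff α β N pw w v

/-- `a_v(S) = Σ_{w ∈ S} a_v(w)`. -/
noncomputable def affOut (α β N : ℝ) (pw : Link X → ℝ) (v : Link X) (S : Finset (Link X)) : ℝ :=
  ∑ w ∈ S, aff α β N pw v w

/-! Summing the outgoing affectances over `L` counts the same pairs as summing the incoming ones,
so their total is at most `|L|`; by Markov's inequality at most half of the links send out more
than `2`. Discarding those links only decreases the affectances among the remaining ones, as these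
are nonnegative. -/

lemma card_filter_lt_nsmul_le_sum {ι M : Type*} [AddCommMonoid M] [LinearOrder M]
    [IsOrderedAddMonoid M] {s : Finset ι} {f : ι → M} (hf : ∀ i ∈ s, 0 ≤ f i) (c : M) :
    #{i ∈ s | c < f i} • c ≤ ∑ i ∈ s, f i :=
  calc #{i ∈ s | c < f i} • c
      ≤ ∑ i ∈ s with c < f i, f i :=
        card_nsmul_le_sum _ _ _ fun _ hi => (mem_filter.1 hi).2.le
    _ ≤ ∑ i ∈ s, f i :=
        sum_le_sum_of_subset_of_nonneg (filter_subset _ _) fun i hi _ => hf i hi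

section OrderedField

variable {ι K : Type*} [Field K] [LinearOrder K] [IsStrictOrderedRing K] {s : Finset ι}

lemma card_sub_sum_div_le_card_filter_le {f : ι → K} (hf : ∀ i ∈ s, 0 ≤ f i) {c : K}
    (hc : 0 < c) : (#s : K) - (∑ i ∈ s, f i) / c ≤ #{i ∈ s | f i ≤ c} := by
  have hcard : (#s : K) = #{i ∈ s | f i ≤ c} + #{i ∈ s | c < f i} := by
    simpa only [not_le, Nat.cast_add] using
      congrArg (Nat.cast (R := K)) (s.card_filter_add_card_filter_not (f · ≤ c)).symm
  have hlarge : (#{i ∈ s | c < f i} : K) ≤ (∑ i ∈ s, f i) / c :=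
    (le_div_iff₀ hc).2 (by simpa only [nsmul_eq_mul] using card_filter_lt_nsmul_le_sum hf c)
  linarith

/-- The entry `a i j` plays the role of the affectance of link `i` on link `j`. -/
theorem stmt_6_general {a : ι → ι → K} (ha : ∀ i ∈ s, ∀ j ∈ s, 0 ≤ a i j) {γ δ : K}
    (hcol : ∀ j ∈ s, ∑ i ∈ s, a i j ≤ γ) (hδ : 0 < δ) :
    ∃ t ⊆ s, (1 - γ / δ) * #s ≤ #t ∧
      (∀ j ∈ t, ∑ i ∈ t, a i j ≤ γ) ∧ (∀ i ∈ t, ∑ j ∈ t, a i j ≤ δ) := by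
  have htotal : ∑ i ∈ s, ∑ j ∈ s, a i j ≤ γ * #s := by
    rw [sum_comm, mul_comm, ← nsmul_eq_mul]
    exact sum_le_card_nsmul _ _ _ hcol
  have hsub : {i ∈ s | ∑ j ∈ s, a i j ≤ δ} ⊆ s := filter_subset _ _
  refine ⟨{i ∈ s | ∑ j ∈ s, a i j ≤ δ}, hsub, ?_, fun j hj => ?_, fun i hi => ?_⟩
  · calc (1 - γ / δ) * #s = #s - γ * #s / δ := by ring
      _ ≤ #s - (∑ i ∈ s, ∑ j ∈ s, a i j) / δ := by gcongr
      _ ≤ #{i ∈ s | ∑ j ∈ s, a i j ≤ δ} :=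
        card_sub_sum_div_le_card_filter_le (fun i hi => sum_nonneg (ha i hi)) hδ
  · exact (sum_le_sum_of_subset_of_nonneg hsub fun i hi _ => ha i hi j (hsub hj)).trans
      (hcol j (hsub hj))
  · exact (sum_le_sum_of_subset_of_nonneg hsub fun j hj _ => ha i (hsub hi) j hj).trans
      (mem_filter.1 hi).2

end OrderedField

lemma cConst_nonneg {α β N : ℝ} {pw : Link X → ℝ} {v : Link X} (hβ : 0 ≤ β) (hv : 0 ≤ pw v)
    (hnoise : β * N * linkLen v ^ α ≤ pw v) : 0 ≤ cConst α β N pw v :=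
  div_nonneg hβ (sub_nonneg.2 (div_le_one_of_le₀ hnoise hv))

lemma aff_nonneg {α β N : ℝ} {pw : Link X → ℝ} {w v : Link X} (hβ : 0 ≤ β) (hw : 0 ≤ pw w)
    (hv : 0 ≤ pw v) (hnoise : β * N * linkLen v ^ α ≤ pw v) : 0 ≤ aff α β N pw w v := by
  unfold aff
  split_ifs
  · exact le_rfl
  · have hdist : 0 ≤ linkLen v / linkDist w v := div_nonneg dist_nonneg dist_nonneg
    exact le_min zero_le_one (mul_nonneg
      (mul_nonneg (cConst_nonneg hβ hv hnoise) (div_nonneg hw hv)) (Real.rpow_nonneg hdist α))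

/-- Every finite feasible set `L` of links (under any power assignment)
contains a subset `W` with `|W| ≥ |L|/2` that is 2-bi-feasible: `a_W(u) ≤ 2` and
`a_u(W) ≤ 2` for every `u ∈ W`. -/
theorem stmt_6 {X : Type*} [MetricSpace X] (α β N : ℝ) (pw : Link X → ℝ)
    (L : Finset (Link X))
    (hα : 0 < α) (hβ : 0 < β) (hN : 0 ≤ N)
    (hlen : ∀ v ∈ L, 0 < linkLen v)
    (hpw : ∀ v ∈ L, 0 < pw v)
    (hnoise : ∀ v ∈ L, β * N * linkLen v ^ α < pw v)
    (hdd : ∀ v ∈ L, ∀ w ∈ L, w ≠ v → 0 < linkDist w v)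
    (hfeas : ∀ v ∈ L, affIn α β N pw L v ≤ 1) :
    ∃ W ⊆ L, (L.card : ℝ) / 2 ≤ W.card ∧
      (∀ u ∈ W, affIn α β N pw W u ≤ 2) ∧
      (∀ u ∈ W, affOut α β N pw u W ≤ 2) := by
  obtain ⟨W, hWL, hcard, hin, hout⟩ := stmt_6_general (a := aff α β N pw)
    (fun w hw v hv => aff_nonneg hβ.le (hpw w hw).le (hpw v hv).le (hnoise v hv).le) hfeas two_pos
  exact ⟨W, hWL, by linarith, fun u hu => (hin u hu).trans one_le_two, hout⟩
end

section
/- For all constants c₁ ≥ 1 and c₂ ≥ c₃ > 0 there exists a constant c > 0 depending only on α, c₁, c₂, c₃ with the following property. In the variable-QoS setting, let L' ∪ {u} be a finite set of links such that c₃ ≤ c_v ≤ c₂ for every link v ∈ L' ∪ {u} and the power assignment is nearly uniform on L' ∪ {u}, i.e., P_v ≤ c₁ P_w for all links v, w ∈ L' ∪ {u}. Let γ > 0 and suppose L' is γ-anti-feasible. Then a_u(L') ≤ c · max(1, γ). -/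
open Finset MeasureTheory
open scoped Classical

variable {X : Type*} [MetricSpace X]

/-- In the variable-QoS setting, the constant `c_v = β_v/(1 - β_v N_v ℓ_v^α / P_v)`. -/
noncomputable def cConstQ (α : ℝ) (β N pw : Link X → ℝ) (v : Link X) : ℝ :=
  β v / (1 - β v * N v * linkLen v ^ α / pw v)

/-- The (thresholded) affectance `a_w(v)` of link `w` on link `v` (variable QoS). -/
noncomputable def affQ (α : ℝ) (β N pw : Link X → ℝ) (w v : Link X) : ℝ :=
  if w = v then 0
  else min 1 (cConstQ α β N pw v * (pw w / pw v) * (linkLen v / linkDist w v) ^ α)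

/-- `a_S(v) = Σ_{w ∈ S} a_w(v)` (variable QoS). -/
noncomputable def affInQ (α : ℝ) (β N pw : Link X → ℝ) (S : Finset (Link X)) (v : Link X) : ℝ :=
  ∑ w ∈ S, affQ α β N pw w v

/-- `a_v(S) = Σ_{w ∈ S} a_v(w)` (variable QoS). -/
noncomputable def affOutQ (α : ℝ) (β N pw : Link X → ℝ) (v : Link X) (S : Finset (Link X)) : ℝ :=
  ∑ w ∈ S, affQ α β N pw v w

/-!
Split `L` according to whether `ℓ_w ≤ d_{uw}`, and in each part compare the affectance of `u`
with that of a single member `v`. Among the links with `ℓ_w ≤ d_{uw}`, let `v` have its sender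
nearest to that of `u`: the triangle inequality gives `d_{vw} ≤ 3 d_{uw}`, so `a_u(w)` is at most
a constant times `a_v(w)`. Among the links with `d_{uw} < ℓ_w`, let `v` be the shortest: now
`d_{vw} ≤ 3 ℓ_w`, so `a_v(w)` is bounded below while `a_u(w) ≤ 1`. In both parts anti-feasibility
bounds the total affectance of `v`, and `v` itself adds at most `1` to that of `u`.
-/

section Geometry

variable {u v w : Link X}

lemma linkLen_nonneg (v : Link X) : 0 ≤ linkLen v := dist_nonneg

lemma linkDist_nonneg (w v : Link X) : 0 ≤ linkDist w v := dist_nonneg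

lemma linkDist_le_three_mul_linkLen (hv : linkDist u v ≤ linkLen v)
    (hw : linkDist u w ≤ linkLen w) (hvw : linkLen v ≤ linkLen w) :
    linkDist v w ≤ 3 * linkLen w := by
  have htri : linkDist v w ≤ linkLen v + linkDist u v + linkDist u w := by
    simpa only [linkDist, linkLen, dist_comm u.sender v.receiver] using
      dist_triangle4 v.sender v.receiver u.sender w.receiver
  linarith

lemma linkDist_le_three_mul_linkDist (hw : linkLen w ≤ linkDist u w)
    (hvw : dist u.sender v.sender ≤ dist u.sender w.sender) :
    linkDist v w ≤ 3 * linkDist u w := by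
  have hv_tri : linkDist v w ≤ dist u.sender v.sender + linkDist u w :=
    dist_triangle_left v.sender w.receiver u.sender
  have hw_tri : dist u.sender w.sender ≤ linkDist u w + linkLen w :=
    dist_triangle_right u.sender w.sender w.receiver
  linarith

end Geometry

lemma min_one_le_max_one_mul_min_one {C x y : ℝ} (hy : 0 ≤ y) (h : x ≤ C * y) :
    min 1 x ≤ max 1 C * min 1 y := by
  rw [mul_min_of_nonneg _ _ (by positivity), mul_one]
  exact min_le_min (le_max_left 1 C) (h.trans (by gcongr; exact le_max_right 1 C))

section Affectance

variable {α c₁ c₃ t K γ : ℝ} {β N pw : Link X → ℝ} {S L : Finset (Link X)} {u v w : Link X}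

/-- The affectance of `w` on `v` before it is truncated at `1`. -/
noncomputable def rawAffQ (α : ℝ) (β N pw : Link X → ℝ) (w v : Link X) : ℝ :=
  cConstQ α β N pw v * (pw w / pw v) * (linkLen v / linkDist w v) ^ α

lemma rawAffQ_nonneg (hc : 0 ≤ cConstQ α β N pw v) (hpw : 0 ≤ pw w) (hpv : 0 ≤ pw v) :
    0 ≤ rawAffQ α β N pw w v := by
  have hl := linkLen_nonneg v
  have hd := linkDist_nonneg w v
  unfold rawAffQ
  positivity

lemma rawAffQ_le_mul_rawAffQ (hα : 0 ≤ α) (ht : 0 ≤ t) (hc : 0 ≤ cConstQ α β N pw w)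
    (hpu : 0 ≤ pw u) (hpw : 0 ≤ pw w) (hpuv : pw u ≤ c₁ * pw v) (hd : 0 < linkDist v w)
    (hdvw : linkDist v w ≤ t * linkDist u w) :
    rawAffQ α β N pw u w ≤ c₁ * t ^ α * rawAffQ α β N pw v w := by
  have hl := linkLen_nonneg w
  have hdu : 0 < linkDist u w := pos_of_mul_pos_right (hd.trans_le hdvw) ht
  have hratio : linkLen w / linkDist u w ≤ t * (linkLen w / linkDist v w) := by
    rw [← mul_div_assoc, div_le_div_iff₀ hdu hd]
    calc linkLen w * linkDist v w ≤ linkLen w * (t * linkDist u w) := by gcongr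
      _ = t * linkLen w * linkDist u w := by ring
  calc rawAffQ α β N pw u w
      ≤ cConstQ α β N pw w * (pw u / pw w) * (t * (linkLen w / linkDist v w)) ^ α := by
        unfold rawAffQ; gcongr
    _ ≤ cConstQ α β N pw w * (c₁ * pw v / pw w) * (t * (linkLen w / linkDist v w)) ^ α := by
        gcongr
    _ = c₁ * t ^ α * rawAffQ α β N pw v w := by
        rw [Real.mul_rpow ht (by positivity), rawAffQ]; ring

lemma one_le_mul_rawAffQ (hα : 0 ≤ α) (hc₃ : 0 < c₃) (ht : 0 ≤ t)
    (hc : c₃ ≤ cConstQ α β N pw w) (hpw : 0 < pw w) (hpwv : pw w ≤ c₁ * pw v)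
    (hd : 0 < linkDist v w) (hdvw : linkDist v w ≤ t * linkLen w) :
    1 ≤ c₁ * t ^ α / c₃ * rawAffQ α β N pw v w := by
  have hl := linkLen_nonneg w
  have hconst : 1 ≤ cConstQ α β N pw w / c₃ := (one_le_div hc₃).2 hc
  have hpower : 1 ≤ c₁ * pw v / pw w := (one_le_div hpw).2 hpwv
  have hratio : 1 ≤ (t * linkLen w / linkDist v w) ^ α :=
    Real.one_le_rpow ((one_le_div hd).2 hdvw) hα
  calc 1 ≤ cConstQ α β N pw w / c₃ * (c₁ * pw v / pw w) *
          (t * linkLen w / linkDist v w) ^ α :=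
        one_le_mul_of_one_le_of_one_le (one_le_mul_of_one_le_of_one_le hconst hpower) hratio
    _ = c₁ * t ^ α / c₃ * rawAffQ α β N pw v w := by
        rw [mul_div_assoc t, Real.mul_rpow ht (by positivity), rawAffQ]; ring

lemma affQ_self (α : ℝ) (β N pw : Link X → ℝ) (v : Link X) : affQ α β N pw v v = 0 :=
  if_pos rfl

lemma affQ_of_ne (hwv : w ≠ v) : affQ α β N pw w v = min 1 (rawAffQ α β N pw w v) :=
  if_neg hwv

lemma affQ_le_one (α : ℝ) (β N pw : Link X → ℝ) (w v : Link X) : affQ α β N pw w v ≤ 1 := by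
  unfold affQ
  split_ifs
  exacts [zero_le_one, min_le_left _ _]

lemma affQ_nonneg (hc : 0 ≤ cConstQ α β N pw v) (hpw : 0 ≤ pw w) (hpv : 0 ≤ pw v) :
    0 ≤ affQ α β N pw w v := by
  rcases eq_or_ne w v with rfl | hwv
  · exact (affQ_self ..).ge
  · rw [affQ_of_ne hwv]
    exact le_min zero_le_one (rawAffQ_nonneg hc hpw hpv)

lemma affQ_le_mul_affQ (hα : 0 ≤ α) (ht : 0 ≤ t) (hvw : v ≠ w) (hc : 0 ≤ cConstQ α β N pw w)
    (hpu : 0 ≤ pw u) (hpv : 0 ≤ pw v) (hpw : 0 ≤ pw w) (hpuv : pw u ≤ c₁ * pw v)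
    (hd : 0 < linkDist v w) (hdvw : linkDist v w ≤ t * linkDist u w) :
    affQ α β N pw u w ≤ max 1 (c₁ * t ^ α) * affQ α β N pw v w := by
  rcases eq_or_ne u w with rfl | huw
  · rw [affQ_self]
    exact mul_nonneg (by positivity) (affQ_nonneg hc hpv hpw)
  · rw [affQ_of_ne huw, affQ_of_ne hvw]
    exact min_one_le_max_one_mul_min_one (rawAffQ_nonneg hc hpv hpw)
      (rawAffQ_le_mul_rawAffQ hα ht hc hpu hpw hpuv hd hdvw)

lemma one_le_mul_affQ (hα : 0 ≤ α) (hc₃ : 0 < c₃) (ht : 0 ≤ t) (hvw : v ≠ w)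
    (hc : c₃ ≤ cConstQ α β N pw w) (hpv : 0 ≤ pw v) (hpw : 0 < pw w) (hpwv : pw w ≤ c₁ * pw v)
    (hd : 0 < linkDist v w) (hdvw : linkDist v w ≤ t * linkLen w) :
    1 ≤ max 1 (c₁ * t ^ α / c₃) * affQ α β N pw v w := by
  rw [affQ_of_ne hvw]
  simpa only [min_self] using min_one_le_max_one_mul_min_one
    (rawAffQ_nonneg (hc₃.le.trans hc) hpv hpw.le)
    (one_le_mul_rawAffQ hα hc₃ ht hc hpw hpwv hd hdvw)

/-- The `γ`-anti-feasible sets of links: no member has total affectance more than `γ` on the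
set. -/
def AntiFeasible (α : ℝ) (β N pw : Link X → ℝ) (γ : ℝ) (S : Finset (Link X)) : Prop :=
  ∀ v ∈ S, affOutQ α β N pw v S ≤ γ

lemma AntiFeasible.subset (hL : AntiFeasible α β N pw γ L) (hSL : S ⊆ L)
    (hc : ∀ v ∈ L, 0 ≤ cConstQ α β N pw v) (hpw : ∀ v ∈ L, 0 ≤ pw v) :
    AntiFeasible α β N pw γ S := fun v hv =>
  (sum_le_sum_of_subset_of_nonneg hSL fun w hw _ =>
    affQ_nonneg (hc w hw) (hpw v (hSL hv)) (hpw w hw)).trans (hL v (hSL hv))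

lemma affOutQ_le_one_add_mul (hv : v ∈ S)
    (h : ∀ w ∈ S, v ≠ w → affQ α β N pw u w ≤ K * affQ α β N pw v w) :
    affOutQ α β N pw u S ≤ 1 + K * affOutQ α β N pw v S := by
  unfold affOutQ
  rw [← add_sum_erase _ _ hv, ← add_sum_erase _ (affQ α β N pw v) hv, affQ_self, zero_add,
    mul_sum]
  exact add_le_add (affQ_le_one ..)
    (sum_le_sum fun w hw => h w (mem_of_mem_erase hw) (ne_of_mem_erase hw).symm)

lemma AntiFeasible.affOutQ_le_of_exists_dominating (hS : AntiFeasible α β N pw γ S) (hK : 0 ≤ K)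
    (h : S.Nonempty → ∃ v ∈ S, ∀ w ∈ S, v ≠ w → affQ α β N pw u w ≤ K * affQ α β N pw v w) :
    affOutQ α β N pw u S ≤ (1 + K) * max 1 γ := by
  rcases S.eq_empty_or_nonempty with rfl | hne
  · rw [affOutQ, sum_empty]
    positivity
  obtain ⟨v, hv, hdom⟩ := h hne
  calc affOutQ α β N pw u S ≤ 1 + K * affOutQ α β N pw v S := affOutQ_le_one_add_mul hv hdom
    _ ≤ max 1 γ + K * max 1 γ := by
        gcongr
        exacts [le_max_left 1 γ, (hS v hv).trans (le_max_right 1 γ)]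
    _ = (1 + K) * max 1 γ := by ring

lemma AntiFeasible.affOutQ_le_of_linkLen_le_linkDist (hS : AntiFeasible α β N pw γ S)
    (hα : 0 ≤ α) (hpu : 0 ≤ pw u) (hpw : ∀ v ∈ S, 0 ≤ pw v)
    (hd : ∀ v ∈ S, ∀ w ∈ S, v ≠ w → 0 < linkDist v w)
    (hc : ∀ v ∈ S, 0 ≤ cConstQ α β N pw v) (hpuv : ∀ v ∈ S, pw u ≤ c₁ * pw v)
    (hfar : ∀ w ∈ S, linkLen w ≤ linkDist u w) :
    affOutQ α β N pw u S ≤ (1 + max 1 (c₁ * 3 ^ α)) * max 1 γ := by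
  refine hS.affOutQ_le_of_exists_dominating (by positivity) fun hne => ?_
  obtain ⟨v, hv, hnearest⟩ := S.exists_min_image (fun w => dist u.sender w.sender) hne
  exact ⟨v, hv, fun w hw hvw => affQ_le_mul_affQ hα zero_le_three hvw (hc w hw) hpu (hpw v hv)
    (hpw w hw) (hpuv v hv) (hd v hv w hw hvw)
    (linkDist_le_three_mul_linkDist (hfar w hw) (hnearest w hw))⟩

lemma AntiFeasible.affOutQ_le_of_linkDist_le_linkLen (hS : AntiFeasible α β N pw γ S)
    (hα : 0 ≤ α) (hc₃ : 0 < c₃) (hpw : ∀ v ∈ S, 0 < pw v)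
    (hd : ∀ v ∈ S, ∀ w ∈ S, v ≠ w → 0 < linkDist v w)
    (hc : ∀ v ∈ S, c₃ ≤ cConstQ α β N pw v) (hpvw : ∀ v ∈ S, ∀ w ∈ S, pw v ≤ c₁ * pw w)
    (hnear : ∀ w ∈ S, linkDist u w ≤ linkLen w) :
    affOutQ α β N pw u S ≤ (1 + max 1 (c₁ * 3 ^ α / c₃)) * max 1 γ := by
  refine hS.affOutQ_le_of_exists_dominating (by positivity) fun hne => ?_
  obtain ⟨v, hv, hshortest⟩ := S.exists_min_image linkLen hne
  exact ⟨v, hv, fun w hw hvw => (affQ_le_one ..).trans <|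
    one_le_mul_affQ hα hc₃ zero_le_three hvw (hc w hw) (hpw v hv).le (hpw w hw)
      (hpvw w hw v hv) (hd v hv w hw hvw)
      (linkDist_le_three_mul_linkLen (hnear v hv) (hnear w hw) (hshortest w hw))⟩

theorem stmt_12_general (hα : 0 ≤ α) (hc₃ : 0 < c₃) (hpu : 0 ≤ pw u) (hpw : ∀ v ∈ L, 0 < pw v)
    (hd : ∀ v ∈ L, ∀ w ∈ L, v ≠ w → 0 < linkDist v w)
    (hc : ∀ v ∈ L, c₃ ≤ cConstQ α β N pw v)
    (hpuv : ∀ v ∈ L, pw u ≤ c₁ * pw v) (hpvw : ∀ v ∈ L, ∀ w ∈ L, pw v ≤ c₁ * pw w)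
    (hL : AntiFeasible α β N pw γ L) :
    affOutQ α β N pw u L ≤
      (2 + max 1 (c₁ * 3 ^ α) + max 1 (c₁ * 3 ^ α / c₃)) * max 1 γ := by
  have hc0 : ∀ v ∈ L, 0 ≤ cConstQ α β N pw v := fun v hv => hc₃.le.trans (hc v hv)
  have hpw0 : ∀ v ∈ L, 0 ≤ pw v := fun v hv => (hpw v hv).le
  set far := {w ∈ L | linkLen w ≤ linkDist u w}
  set near := {w ∈ L | ¬ linkLen w ≤ linkDist u w}
  have hfarL : far ⊆ L := filter_subset _ _
  have hnearL : near ⊆ L := filter_subset _ _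
  have hfar : affOutQ α β N pw u far ≤ (1 + max 1 (c₁ * 3 ^ α)) * max 1 γ :=
    (hL.subset hfarL hc0 hpw0).affOutQ_le_of_linkLen_le_linkDist hα hpu
      (fun v hv => hpw0 v (hfarL hv)) (fun v hv w hw => hd v (hfarL hv) w (hfarL hw))
      (fun v hv => hc0 v (hfarL hv)) (fun v hv => hpuv v (hfarL hv))
      fun w hw => (mem_filter.1 hw).2
  have hnear : affOutQ α β N pw u near ≤ (1 + max 1 (c₁ * 3 ^ α / c₃)) * max 1 γ :=
    (hL.subset hnearL hc0 hpw0).affOutQ_le_of_linkDist_le_linkLen hα hc₃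
      (fun v hv => hpw v (hnearL hv)) (fun v hv w hw => hd v (hnearL hv) w (hnearL hw))
      (fun v hv => hc v (hnearL hv)) (fun v hv w hw => hpvw v (hnearL hv) w (hnearL hw))
      fun w hw => (not_le.1 (mem_filter.1 hw).2).le
  calc affOutQ α β N pw u L = affOutQ α β N pw u far + affOutQ α β N pw u near :=
        (sum_filter_add_sum_filter_not ..).symm
    _ ≤ _ := add_le_add hfar hnear
    _ = _ := by ring

end Affectance

/-- For all `c₁ ≥ 1` and `c₂ ≥ c₃ > 0` there is `c > 0` depending only
on `α, c₁, c₂, c₃` such that, in the variable-QoS setting with `c₃ ≤ c_v ≤ c₂` on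
`L' ∪ {u}` and a nearly uniform power assignment (`P_v ≤ c₁ P_w` on `L' ∪ {u}`), if `L'`
is `γ`-anti-feasible then `a_u(L') ≤ c · max 1 γ`. -/
theorem stmt_12 (α : ℝ) (hα : 0 < α) (c₁ c₂ c₃ : ℝ)
    (hc₁ : 1 ≤ c₁) (hc₃ : 0 < c₃) (hc₂ : c₃ ≤ c₂) :
    ∃ c : ℝ, 0 < c ∧
      ∀ (X : Type*) [MetricSpace X] (β N pw : Link X → ℝ)
        (L' : Finset (Link X)) (u : Link X) (γ : ℝ),
        (∀ v ∈ insert u (↑L' : Set (Link X)), 0 < β v) →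
        (∀ v ∈ insert u (↑L' : Set (Link X)), 0 ≤ N v) →
        (∀ v ∈ insert u (↑L' : Set (Link X)), 0 < linkLen v) →
        (∀ v ∈ insert u (↑L' : Set (Link X)), 0 < pw v) →
        (∀ v ∈ insert u (↑L' : Set (Link X)), β v * N v * linkLen v ^ α < pw v) →
        (∀ v ∈ insert u (↑L' : Set (Link X)), ∀ w ∈ insert u (↑L' : Set (Link X)),
          w ≠ v → 0 < linkDist w v) →
        (∀ v ∈ insert u (↑L' : Set (Link X)),
          c₃ ≤ cConstQ α β N pw v ∧ cConstQ α β N pw v ≤ c₂) →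
        (∀ v ∈ insert u (↑L' : Set (Link X)), ∀ w ∈ insert u (↑L' : Set (Link X)),
          pw v ≤ c₁ * pw w) →
        0 < γ →
        (∀ v ∈ L', affOutQ α β N pw v L' ≤ γ) →
        affOutQ α β N pw u L' ≤ c * max 1 γ :=
  ⟨2 + max 1 (c₁ * 3 ^ α) + max 1 (c₁ * 3 ^ α / c₃), by positivity,
    fun X _ β N pw L' u γ _ _ _ hpw _ hd hc hnear _ hanti =>
      have hmem : ∀ v ∈ L', v ∈ insert u (↑L' : Set (Link X)) := fun _ => Set.mem_insert_of_mem u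
      have hu : u ∈ insert u (↑L' : Set (Link X)) := Set.mem_insert u _
      stmt_12_general hα.le hc₃ (hpw u hu).le (fun v hv => hpw v (hmem v hv))
        (fun v hv w hw => hd w (hmem w hw) v (hmem v hv)) (fun v hv => (hc v (hmem v hv)).1)
        (fun v hv => hnear u hu v (hmem v hv))
        (fun v hv w hw => hnear v (hmem v hv) w (hmem w hw)) hanti⟩
end
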